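/- arXiv:1907.01373 — 2 statements merged into one kernel-verified Lean document; each statement's English description precedes it below -/
import Mathlib

section
/- Let 0<s<1 and 1<p<∞ satisfy sp>1. There is a constant C depending only on s and p such that for every metric space (X,d), every open interval I ⊆ ℝ and every continuous map u : I → X, one has ∫_I∫_I (osc_{[x,y]} u)^p / |y-x|^{1+sp} dx dy ≤ C ∫_I∫_I d(u(x),u(y))^p / |y-x|^{1+sp} dx dy. -/
open MeasureTheory Set ENNReal

/-- The oscillation of a map `u` into a metric space on the set `A`, valued in `ℝ≥0∞`. -/
noncomputable def oscE {X : Type*} [PseudoEMetricSpace X] (u : ℝ → X) (A : Set ℝ) : ℝ≥0∞ :=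
  ⨆ z ∈ A, ⨆ t ∈ A, edist (u z) (u t)

/-!
Write `E_τ(S)` for the double integral over `S` of `d(u(w), u(t)) ^ p / |w - t| ^ (1 + τ)`, and pick
an exponent `τ` strictly between `1` and `s p`.

Chaining gives the Morrey bound `(osc_{[x,y]} u) ^ p ≤ C |x - y| ^ (τ - 1) E_τ([x,y])`: a point `z`
of `[x,y]` is the limit of points `w_k`, at the scales `|x - y| 2 ^ (-k)`, chosen so that the inner
integral of the kernel at `w_k` and the kernel at `(w_k, w_{k+1})` are both at most a constant times
their average. The distances `d(u(w_k), u(w_{k+1}))` then decay geometrically, because `τ > 1`.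

Dividing by `|x - y| ^ (1 + s p)` and exchanging the integrals, every pair `(z, t)` collects the
weight `∫ |x - y| ^ (τ - s p - 2)` over the pairs `(x, y)` whose interval contains both `z` and `t`.
Because `τ < s p` this weight is at most a constant times `|z - t| ^ (τ - s p)`, the factor by which
the kernels of exponents `τ` and `s p` differ.
-/

section Gagliardo

variable {X : Type*} [PseudoEMetricSpace X] {u : ℝ → X} {p σ : ℝ} {S : Set ℝ} {w t : ℝ}

/-- The integrand of the Gagliardo seminorm `W^{s,p}`, with `σ` in the role of the product `s p`.
It takes the value `0` on the diagonal when `0 < p`. -/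
noncomputable def gagliardoKernel (u : ℝ → X) (p σ w t : ℝ) : ℝ≥0∞ :=
  edist (u w) (u t) ^ p / edist w t ^ (1 + σ)

/-- The `p`-th power of the Gagliardo seminorm `|u|_{W^{s,p}(S)}`, where `σ = s p`. -/
noncomputable def gagliardoEnergy (u : ℝ → X) (p σ : ℝ) (S : Set ℝ) : ℝ≥0∞ :=
  ∫⁻ w in S, ∫⁻ t in S, gagliardoKernel u p σ w t

lemma gagliardoKernel_self (hp : 0 < p) : gagliardoKernel u p σ w w = 0 := by
  simp [gagliardoKernel, hp]

lemma gagliardoKernel_add (hp : 0 < p) (δ : ℝ) :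
    gagliardoKernel u p (σ + δ) w t = edist w t ^ (-δ) * gagliardoKernel u p σ w t := by
  rcases eq_or_ne w t with rfl | hwt
  · simp [gagliardoKernel_self hp]
  · have h0 : edist w t ≠ 0 := edist_pos.2 hwt |>.ne'
    simp only [gagliardoKernel, div_eq_mul_inv, ← ENNReal.rpow_neg]
    rw [mul_left_comm, ← ENNReal.rpow_add _ _ h0 (edist_ne_top _ _)]
    ring_nf

lemma edist_rpow_le_edist_rpow_mul_gagliardoKernel (hp : 0 < p) :
    edist (u w) (u t) ^ p ≤ edist w t ^ (1 + σ) * gagliardoKernel u p σ w t := by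
  rcases eq_or_ne w t with rfl | hwt
  · simp [hp]
  · have h0 : edist w t ≠ 0 := edist_pos.2 hwt |>.ne'
    have ht : edist w t ≠ ∞ := edist_ne_top _ _
    rw [gagliardoKernel, ENNReal.mul_div_cancel (by simp [ENNReal.rpow_eq_zero_iff, h0, ht])
      (by simp [ENNReal.rpow_eq_top_iff, h0, ht])]

lemma aemeasurable_gagliardoKernel (hS : MeasurableSet S) (hu : ContinuousOn u S) :
    AEMeasurable (Function.uncurry (gagliardoKernel u p σ))
      ((volume.restrict S).prod (volume.restrict S)) := by
  have hcont : ContinuousOn (fun Q : ℝ × ℝ ↦ edist (u Q.1) (u Q.2)) (S ×ˢ S) :=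
    continuous_edist.comp_continuousOn <|
      (hu.comp continuousOn_fst fun _ hQ ↦ hQ.1).prodMk
        (hu.comp continuousOn_snd fun _ hQ ↦ hQ.2)
  rw [Measure.prod_restrict]
  exact ((hcont.aemeasurable (hS.prod hS)).pow_const p).div (by fun_prop)

lemma aemeasurable_gagliardoKernel_right (hS : MeasurableSet S) (hu : ContinuousOn u S) (w : ℝ) :
    AEMeasurable (gagliardoKernel u p σ w) (volume.restrict S) := by
  have hcont : ContinuousOn (fun t ↦ edist (u w) (u t)) S :=
    continuous_edist.comp_continuousOn (continuousOn_const.prodMk hu)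
  exact ((hcont.aemeasurable hS).pow_const p).div (by fun_prop)

end Gagliardo

section Chaining

variable {X : Type*} [PseudoEMetricSpace X] {u : ℝ → X} {p τ x y z w : ℝ} {S J : Set ℝ}
  {m : ℝ≥0∞}

/-- `w` is an admissible point, at scale `l`, of a chain in `S` converging to `z`: it is `l`-close
to `z`, and its share of the Gagliardo energy of `S` is at most twice the share `1 / l` that an
average point of a set of measure `l` has. -/
structure IsChainPoint (u : ℝ → X) (p τ : ℝ) (S : Set ℝ) (z : ℝ) (l : ℝ≥0∞) (w : ℝ) : Prop where
  mem : w ∈ S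
  edist_le : edist w z ≤ l
  mul_lintegral_le : l * ∫⁻ t in S, gagliardoKernel u p τ w t ≤ 2 * gagliardoEnergy u p τ S

lemma exists_mem_measure_mul_le_lintegral {α : Type*} [MeasurableSpace α] {μ : Measure α}
    {f : α → ℝ≥0∞} {S J : Set α} (hJS : J ⊆ S) (hJ0 : μ J ≠ 0) (hJt : μ J ≠ ∞)
    (hf : AEMeasurable f (μ.restrict S)) : ∃ a ∈ J, μ J * f a ≤ ∫⁻ a in S, f a ∂μ := by
  obtain ⟨a, haJ, ha⟩ := exists_le_setLAverage hJ0 hJt (hf.mono_set hJS)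
  refine ⟨a, haJ, le_trans ?_ (lintegral_mono_set hJS)⟩
  rwa [setLAverage_eq, ENNReal.le_div_iff_mul_le (.inl hJ0) (.inl hJt), mul_comm] at ha

-- Averaging the sum of both left-hand terms over `J` bounds them at the same point.
lemma IsChainPoint.exists_mul_lintegral_add_gagliardoKernel_le (hS : MeasurableSet S)
    (hu : ContinuousOn u S) (hm : m ≠ 0) (hm' : m ≠ ∞) (hJS : J ⊆ S) (hJ : volume J = m)
    (hw : IsChainPoint u p τ S z (2 * m) w) :
    ∃ w' ∈ J, m * (∫⁻ t in S, gagliardoKernel u p τ w' t) + m * (m * gagliardoKernel u p τ w w') ≤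
      2 * gagliardoEnergy u p τ S := by
  set g : ℝ → ℝ≥0∞ := fun w' ↦ ∫⁻ t in S, gagliardoKernel u p τ w' t
  have hg : AEMeasurable g (volume.restrict S) :=
    (aemeasurable_gagliardoKernel hS hu).lintegral_prod_right
  have hK := aemeasurable_gagliardoKernel_right (p := p) (σ := τ) hS hu w
  have hgw : m * g w ≤ gagliardoEnergy u p τ S := by
    have := hw.mul_lintegral_le
    rwa [mul_assoc, ENNReal.mul_le_mul_iff_right two_ne_zero ofNat_ne_top] at this
  obtain ⟨w', hw'J, hw'⟩ := exists_mem_measure_mul_le_lintegral hJS (hJ ▸ hm) (hJ ▸ hm')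
    (hg.add (hK.const_mul m))
  refine ⟨w', hw'J, ?_⟩
  calc m * g w' + m * (m * gagliardoKernel u p τ w w')
    _ ≤ ∫⁻ t in S, (g t + m * gagliardoKernel u p τ w t) := by
      rw [← mul_add]
      exact hJ ▸ hw'
    _ = gagliardoEnergy u p τ S + m * g w := by
      rw [lintegral_add_left' hg, lintegral_const_mul' _ _ hm', gagliardoEnergy]
    _ ≤ 2 * gagliardoEnergy u p τ S := by rw [two_mul]; gcongr

lemma IsChainPoint.exists_next (hp : 0 < p) (hτ : 0 ≤ 1 + τ) (hS : MeasurableSet S)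
    (hu : ContinuousOn u S) (hm : m ≠ 0) (hm' : m ≠ ∞) (hJS : J ⊆ S) (hJ : volume J = m)
    (hJz : ∀ w' ∈ J, edist w' z ≤ m) (hw : IsChainPoint u p τ S z (2 * m) w) :
    ∃ w', IsChainPoint u p τ S z m w' ∧
      edist (u w) (u w') ^ p ≤ 2 * 3 ^ (1 + τ) * (m ^ (τ - 1) * gagliardoEnergy u p τ S) := by
  obtain ⟨w', hw'J, hbound⟩ :=
    hw.exists_mul_lintegral_add_gagliardoKernel_le hS hu hm hm' hJS hJ
  refine ⟨w', ⟨hJS hw'J, hJz w' hw'J, le_self_add.trans hbound⟩, ?_⟩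
  have hdist : edist w w' ≤ 3 * m := calc
    edist w w' ≤ edist w z + edist w' z := edist_triangle_right _ _ _
    _ ≤ 2 * m + m := add_le_add hw.edist_le (hJz w' hw'J)
    _ = 3 * m := by ring
  calc edist (u w) (u w') ^ p
    _ ≤ edist w w' ^ (1 + τ) * gagliardoKernel u p τ w w' :=
      edist_rpow_le_edist_rpow_mul_gagliardoKernel hp
    _ ≤ (3 * m) ^ (1 + τ) * gagliardoKernel u p τ w w' := by gcongr
    _ = 3 ^ (1 + τ) * m ^ (τ - 1) * (m * (m * gagliardoKernel u p τ w w')) := by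
      rw [ENNReal.mul_rpow_of_nonneg _ _ hτ, show 1 + τ = τ - 1 + 2 by ring,
        ENNReal.rpow_add (x := m) _ _ hm hm', ENNReal.rpow_two]
      ring
    _ ≤ 3 ^ (1 + τ) * m ^ (τ - 1) * (2 * gagliardoEnergy u p τ S) :=
      mul_le_mul_right (le_add_self.trans hbound) _
    _ = 2 * 3 ^ (1 + τ) * (m ^ (τ - 1) * gagliardoEnergy u p τ S) := by ring

lemma exists_subset_Icc_volume_eq (hz : z ∈ Icc x y) (hm : m ≤ edist x y) :
    ∃ J ⊆ Icc x y, volume J = m ∧ ∀ w ∈ J, edist w z ≤ m := by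
  lift m to NNReal using ne_top_of_le_ne_top (edist_ne_top x y) hm
  have hmxy : (m : ℝ) ≤ y - x := by
    rw [edist_comm, edist_nndist, ENNReal.coe_le_coe, ← NNReal.coe_le_coe, coe_nndist,
      Real.dist_eq, abs_of_nonneg (by linarith [hz.1, hz.2])] at hm
    exact hm
  obtain ⟨a, hxa, hay, haz, hza⟩ : ∃ a, x ≤ a ∧ a + m ≤ y ∧ a ≤ z ∧ z ≤ a + m :=
    ⟨max x (z - m), by grind [NNReal.coe_nonneg]⟩
  refine ⟨Icc a (a + m), Icc_subset_Icc hxa hay, by simp, fun w hw ↦ ?_⟩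
  rw [edist_nndist, ENNReal.coe_le_coe, ← NNReal.coe_le_coe, coe_nndist]
  simpa using Real.dist_le_of_mem_Icc hw ⟨haz, hza⟩

lemma exists_seq_isChainPoint_edist_rpow_le (hp : 0 < p) (hτ : 1 ≤ τ) (hxy : x < y)
    (hz : z ∈ Icc x y) (hu : ContinuousOn u (Icc x y))
    (hw : IsChainPoint u p τ (Icc x y) z (edist x y) w) :
    ∃ v : ℕ → ℝ, v 0 = w ∧
      (∀ k, IsChainPoint u p τ (Icc x y) z (edist x y * 2⁻¹ ^ k) (v k)) ∧
      ∀ k, edist (u (v k)) (u (v (k + 1))) ^ p ≤ 2 * 3 ^ (1 + τ) *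
        ((edist x y * 2⁻¹ ^ k) ^ (τ - 1) * gagliardoEnergy u p τ (Icc x y)) := by
  have hstep (k : ℕ) (v : ℝ) (hv : IsChainPoint u p τ (Icc x y) z (edist x y * 2⁻¹ ^ k) v) :
      ∃ v', IsChainPoint u p τ (Icc x y) z (edist x y * 2⁻¹ ^ (k + 1)) v' ∧
        edist (u v) (u v') ^ p ≤ 2 * 3 ^ (1 + τ) *
          ((edist x y * 2⁻¹ ^ k) ^ (τ - 1) * gagliardoEnergy u p τ (Icc x y)) := by
    have hscale : edist x y * 2⁻¹ ^ k = 2 * (edist x y * 2⁻¹ ^ (k + 1)) := by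
      rw [pow_succ', mul_left_comm, ENNReal.mul_inv_cancel_left two_ne_zero ofNat_ne_top]
    obtain ⟨J, hJS, hJ, hJz⟩ := exists_subset_Icc_volume_eq hz
      (m := edist x y * 2⁻¹ ^ (k + 1)) (mul_le_of_le_one_right' (pow_le_one₀ (by simp) (by simp)))
    obtain ⟨v', hv', hle⟩ := (hscale ▸ hv).exists_next hp (by linarith) measurableSet_Icc hu
      (by simp [hxy.ne]) (by finiteness) hJS hJ hJz
    refine ⟨v', hv', hle.trans ?_⟩
    gcongr _ * ((_ * ?_) ^ _ * _)
    exact pow_le_pow_right_of_le_one' (by simp) k.le_succ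
  choose! next hnext hle using hstep
  let v : ℕ → ℝ := Nat.rec w next
  have hv (k : ℕ) : IsChainPoint u p τ (Icc x y) z (edist x y * 2⁻¹ ^ k) (v k) := by
    induction k with
    | zero => simpa using! hw
    | succ k ih => exact hnext k _ ih
  exact ⟨v, rfl, hv, fun k ↦ hle k _ (hv k)⟩

lemma edist_le_of_isChainPoint (hp : 0 < p) (hτ : 1 ≤ τ) (hxy : x < y) (hz : z ∈ Icc x y)
    (hu : ContinuousOn u (Icc x y)) (hw : IsChainPoint u p τ (Icc x y) z (edist x y) w) :
    edist (u w) (u z) ≤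
      (2 * 3 ^ (1 + τ) * (edist x y ^ (τ - 1) * gagliardoEnergy u p τ (Icc x y))) ^ p⁻¹ /
        (1 - 2⁻¹ ^ ((τ - 1) / p)) := by
  obtain ⟨v, rfl, hv, hle⟩ := exists_seq_isChainPoint_edist_rpow_le hp hτ hxy hz hu hw
  have hvz : Filter.Tendsto v Filter.atTop (nhds z) := by
    rw [tendsto_iff_edist_tendsto_0]
    refine tendsto_of_tendsto_of_tendsto_of_le_of_le tendsto_const_nhds ?_
      (fun _ ↦ zero_le) fun k ↦ (hv k).edist_le
    simpa using ENNReal.Tendsto.const_mul (ENNReal.tendsto_pow_atTop_nhds_zero_of_lt_one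
      (show (2⁻¹ : ℝ≥0∞) < 1 by simp)) (.inr (edist_ne_top x y))
  have huv : Filter.Tendsto (fun k ↦ u (v k)) Filter.atTop (nhds (u z)) :=
    (hu z hz).tendsto.comp (tendsto_nhdsWithin_iff.2 ⟨hvz, .of_forall fun k ↦ (hv k).mem⟩)
  refine edist_le_of_edist_le_geometric_of_tendsto₀ _ _ (fun k ↦ ?_) huv
  have hratio : ((2⁻¹ : ℝ≥0∞) ^ k) ^ (τ - 1) = ((2⁻¹ ^ ((τ - 1) / p)) ^ k) ^ p := by
    simp only [← ENNReal.rpow_natCast, ← ENNReal.rpow_mul]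
    congr 1
    field_simp
  rw [← ENNReal.rpow_le_rpow_iff hp]
  refine (hle k).trans_eq ?_
  rw [ENNReal.mul_rpow_of_nonneg _ _ hp.le, ENNReal.rpow_inv_rpow hp.ne',
    ENNReal.mul_rpow_of_nonneg _ _ (by linarith), hratio]
  ring

end Chaining

section Morrey

variable {X : Type*} [PseudoEMetricSpace X] {u : ℝ → X} {p τ x y : ℝ}

/-- The constant of the Morrey embedding `rpow_oscE_Icc_le`: two chains issuing from a common point,
each with steps decreasing geometrically at the ratio `2 ^ (-(τ - 1) / p)`. -/
noncomputable def morreyConst (p τ : ℝ) : ℝ≥0∞ :=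
  (2 / (1 - 2⁻¹ ^ ((τ - 1) / p))) ^ p * (2 * 3 ^ (1 + τ))

lemma morreyConst_ne_top (hp : 0 < p) (hτ : 1 < τ) : morreyConst p τ ≠ ∞ := by
  have hratio : (2⁻¹ : ℝ≥0∞) ^ ((τ - 1) / p) < 1 :=
    ENNReal.rpow_lt_one (by simp) (div_pos (by linarith) hp)
  have hgap : 1 - (2⁻¹ : ℝ≥0∞) ^ ((τ - 1) / p) ≠ 0 := (tsub_pos_of_lt hratio).ne'
  exact ENNReal.mul_ne_top
    (ENNReal.rpow_ne_top_of_nonneg hp.le (ENNReal.div_ne_top (by simp) hgap))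
    (ENNReal.mul_ne_top (by simp) (ENNReal.rpow_ne_top_of_nonneg (by linarith) (by simp)))

lemma oscE_le_two_mul {S : Set ℝ} {a : X} {r : ℝ≥0∞} (h : ∀ z ∈ S, edist a (u z) ≤ r) :
    oscE u S ≤ 2 * r :=
  iSup₂_le fun z hz ↦ iSup₂_le fun t ht ↦ calc
    edist (u z) (u t) ≤ edist a (u z) + edist a (u t) := edist_triangle_left _ _ _
    _ ≤ 2 * r := by rw [two_mul]; exact add_le_add (h z hz) (h t ht)

lemma rpow_oscE_Icc_le (hp : 0 < p) (hτ : 1 < τ) (hxy : x < y) (hu : ContinuousOn u (Icc x y)) :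
    oscE u (Icc x y) ^ p ≤
      morreyConst p τ * (edist x y ^ (τ - 1) * gagliardoEnergy u p τ (Icc x y)) := by
  have hvol : volume (Icc x y) = edist x y := by
    rw [Real.volume_Icc, edist_comm, edist_dist, Real.dist_eq, abs_of_pos (sub_pos.2 hxy)]
  obtain ⟨w, hw, hwE⟩ : ∃ w ∈ Icc x y,
      volume (Icc x y) * ∫⁻ t in Icc x y, gagliardoKernel u p τ w t ≤
        gagliardoEnergy u p τ (Icc x y) :=
    exists_mem_measure_mul_le_lintegral Subset.rfl (by simp [hxy]) (by simp)
      (aemeasurable_gagliardoKernel measurableSet_Icc hu).lintegral_prod_right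
  have hchain (z : ℝ) (hz : z ∈ Icc x y) : IsChainPoint u p τ (Icc x y) z (edist x y) w := by
    refine ⟨hw, ?_, hvol ▸ hwE.trans (le_mul_of_one_le_left' one_le_two)⟩
    rw [← hvol, Real.volume_Icc, edist_dist]
    exact ENNReal.ofReal_le_ofReal (Real.dist_le_of_mem_Icc hw hz)
  calc oscE u (Icc x y) ^ p
    _ ≤ (2 * ((2 * 3 ^ (1 + τ) *
          (edist x y ^ (τ - 1) * gagliardoEnergy u p τ (Icc x y))) ^ p⁻¹ /
            (1 - 2⁻¹ ^ ((τ - 1) / p)))) ^ p := by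
      gcongr
      exact oscE_le_two_mul fun z hz ↦ edist_le_of_isChainPoint hp hτ.le hxy hz hu (hchain z hz)
    _ = morreyConst p τ * (edist x y ^ (τ - 1) * gagliardoEnergy u p τ (Icc x y)) := by
      rw [← ENNReal.mul_comm_div, ENNReal.mul_rpow_of_nonneg _ _ hp.le,
        ENNReal.rpow_inv_rpow hp.ne', morreyConst]
      ring

lemma rpow_oscE_uIcc_le (hp : 0 < p) (hτ : 1 < τ) (hu : ContinuousOn u (uIcc x y)) :
    oscE u (uIcc x y) ^ p ≤
      morreyConst p τ * (edist x y ^ (τ - 1) * gagliardoEnergy u p τ (uIcc x y)) := by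
  rcases lt_trichotomy x y with hxy | rfl | hxy
  · rw [uIcc_of_lt hxy] at hu ⊢
    exact rpow_oscE_Icc_le hp hτ hxy hu
  · simp [oscE, hp]
  · rw [uIcc_of_gt hxy] at hu ⊢
    rw [edist_comm]
    exact rpow_oscE_Icc_le hp hτ hxy hu

end Morrey

section Weight

variable {a b r δ : ℝ}

lemma lintegral_Ioi_ofReal_rpow_neg (hr : 1 < r) (hb : 0 < b) :
    ∫⁻ v in Ioi b, ENNReal.ofReal v ^ (-r) =
      ENNReal.ofReal b ^ (1 - r) / ENNReal.ofReal (r - 1) := by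
  calc ∫⁻ v in Ioi b, ENNReal.ofReal v ^ (-r)
    _ = ∫⁻ v in Ioi b, ENNReal.ofReal (v ^ (-r)) :=
      setLIntegral_congr_fun measurableSet_Ioi fun v hv ↦ ENNReal.ofReal_rpow_of_pos (hb.trans hv)
    _ = ENNReal.ofReal (∫ v in Ioi b, v ^ (-r)) := by
      refine (ofReal_integral_eq_lintegral_ofReal
        (integrableOn_Ioi_rpow_of_lt (by linarith) hb) ?_).symm
      filter_upwards [self_mem_ae_restrict measurableSet_Ioi] with v hv
      exact Real.rpow_nonneg (hb.trans hv).le _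
    _ = ENNReal.ofReal b ^ (1 - r) / ENNReal.ofReal (r - 1) := by
      rw [integral_Ioi_rpow_of_lt (by linarith) hb, ENNReal.ofReal_rpow_of_pos hb,
        ← ENNReal.ofReal_div_of_pos (by linarith), neg_div, ← div_neg]
      ring_nf

lemma lintegral_Ici_edist_rpow_neg (hr : 1 < r) (hab : a < b) :
    ∫⁻ y in Ici b, edist a y ^ (-r) = edist a b ^ (1 - r) / ENNReal.ofReal (r - 1) := by
  have hedist {y : ℝ} (hy : a < y) : edist a y = ENNReal.ofReal (y - a) := by
    rw [edist_comm, edist_dist, Real.dist_eq, abs_of_pos (sub_pos.2 hy)]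
  rw [hedist hab, ← lintegral_Ioi_ofReal_rpow_neg hr (sub_pos.2 hab),
    setLIntegral_congr Ioi_ae_eq_Ici.symm, ← lintegral_indicator measurableSet_Ioi,
    ← lintegral_indicator measurableSet_Ioi,
    ← lintegral_sub_right_eq_self ((Ioi (b - a)).indicator _) a]
  refine lintegral_congr fun y ↦ ?_
  by_cases hy : b < y
  · simp [hy, hedist (hab.trans hy)]
  · simp [hy]

lemma lintegral_Iic_edist_rpow_neg (hr : 1 < r) (hab : a < b) :
    ∫⁻ x in Iic a, edist x b ^ (-r) = edist a b ^ (1 - r) / ENNReal.ofReal (r - 1) := by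
  have hreflect := lintegral_Ici_edist_rpow_neg hr (neg_lt_neg hab)
  rw [edist_neg_neg, edist_comm, ← lintegral_indicator measurableSet_Ici,
    ← lintegral_neg_eq_self] at hreflect
  rw [← hreflect, ← lintegral_indicator measurableSet_Iic]
  refine lintegral_congr fun x ↦ ?_
  simp [indicator, edist_neg_neg, edist_comm b]

lemma lintegral_Iic_prod_Ici_edist_rpow_neg (hδ : 0 < δ) (hab : a < b) :
    ∫⁻ P in Iic a ×ˢ Ici b, edist P.1 P.2 ^ (-(2 + δ)) =
      edist a b ^ (-δ) / ENNReal.ofReal (1 + δ) / ENNReal.ofReal δ := by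
  have h (x : ℝ) (hx : x ∈ Iic a) : ∫⁻ y in Ici b, edist x y ^ (-(2 + δ)) =
      edist x b ^ (-(1 + δ)) / ENNReal.ofReal (1 + δ) := by
    rw [lintegral_Ici_edist_rpow_neg (by linarith) (hx.trans_lt hab)]
    ring_nf
  rw [Measure.volume_eq_prod, setLIntegral_prod _ (by fun_prop),
    setLIntegral_congr_fun measurableSet_Iic h]
  simp only [div_eq_mul_inv]
  rw [lintegral_mul_const' _ _ (by simp; linarith), lintegral_Iic_edist_rpow_neg (by linarith) hab,
    show 1 - (1 + δ) = -δ by ring, add_sub_cancel_left, div_eq_mul_inv]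
  ring

/-- The constant `2 / (δ (1 + δ))` of `setLIntegral_uIcc_subset_edist_rpow_neg_le`: the two tail
integrals give `1 / (δ (1 + δ))`, and the pairs `x ≤ y` and `y ≤ x` contribute once each. -/
noncomputable def weightConst (δ : ℝ) : ℝ≥0∞ :=
  2 * ((ENNReal.ofReal δ)⁻¹ * (ENNReal.ofReal (1 + δ))⁻¹)

lemma weightConst_ne_top (hδ : 0 < δ) : weightConst δ ≠ ∞ := by
  simp [weightConst, ENNReal.mul_eq_top, hδ, show 0 < 1 + δ by linarith]

lemma setLIntegral_uIcc_subset_edist_rpow_neg_le (hδ : 0 < δ) {z t : ℝ} (hzt : z ≠ t) :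
    ∫⁻ P in {P : ℝ × ℝ | uIcc z t ⊆ uIcc P.1 P.2}, edist P.1 P.2 ^ (-(2 + δ)) ≤
      weightConst δ * edist z t ^ (-δ) := by
  wlog hlt : z < t generalizing z t
  · rw [uIcc_comm, edist_comm]
    exact this hzt.symm (lt_of_le_of_ne (not_lt.1 hlt) hzt.symm)
  have hswap : ∫⁻ P in Ici t ×ˢ Iic z, edist P.1 P.2 ^ (-(2 + δ)) =
      ∫⁻ P in Iic z ×ˢ Ici t, edist P.1 P.2 ^ (-(2 + δ)) := by
    simp_rw [Measure.volume_eq_prod, ← Measure.prod_restrict]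
    rw [← lintegral_prod_swap]
    simp only [Prod.fst_swap, Prod.snd_swap, edist_comm]
  calc ∫⁻ P in {P : ℝ × ℝ | uIcc z t ⊆ uIcc P.1 P.2}, edist P.1 P.2 ^ (-(2 + δ))
    _ ≤ ∫⁻ P in Iic z ×ˢ Ici t ∪ Ici t ×ˢ Iic z, edist P.1 P.2 ^ (-(2 + δ)) := by
      refine lintegral_mono_set fun P hP ↦ ?_
      have := uIcc_subset_uIcc_iff_mem.1 hP
      grind [mem_uIcc]
    _ ≤ 2 * ∫⁻ P in Iic z ×ˢ Ici t, edist P.1 P.2 ^ (-(2 + δ)) := by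
      rw [two_mul]
      exact (lintegral_union_le _ _ _).trans_eq (by rw [hswap])
    _ = weightConst δ * edist z t ^ (-δ) := by
      rw [lintegral_Iic_prod_Ici_edist_rpow_neg hδ hlt, weightConst]
      simp only [div_eq_mul_inv]
      ring

end Weight

section Fubini

lemma lintegral_lintegral_mul_setLIntegral_comm {α β γ : Type*} [MeasurableSpace α]
    [MeasurableSpace β] [MeasurableSpace γ] {μ : Measure α} {ν : Measure β} {ρ : Measure γ}
    [SFinite μ] [SFinite ν] [SFinite ρ] {R : Set ((α × β) × γ)} (hR : MeasurableSet R)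
    {f : α × β → ℝ≥0∞} (hf : Measurable f) {g : γ → ℝ≥0∞} (hg : AEMeasurable g ρ) :
    ∫⁻ x, ∫⁻ y, f (x, y) * ∫⁻ c in {c | ((x, y), c) ∈ R}, g c ∂ρ ∂ν ∂μ =
      ∫⁻ c, (∫⁻ P in {P | (P, c) ∈ R}, f P ∂μ.prod ν) * g c ∂ρ := by
  let F : (α × β) × γ → ℝ≥0∞ := R.indicator fun Pc ↦ f Pc.1 * g Pc.2
  have hF : AEMeasurable F ((μ.prod ν).prod ρ) :=
    ((hf.comp measurable_fst).aemeasurable.mul hg.comp_snd).indicator hR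
  have hleft (P : α × β) : f P * ∫⁻ c in {c | (P, c) ∈ R}, g c ∂ρ = ∫⁻ c, F (P, c) ∂ρ := by
    rw [← lintegral_const_mul'' _ hg.restrict]
    exact (lintegral_indicator (measurable_prodMk_left hR) _).symm
  have hright (c : γ) :
      ∫⁻ P, F (P, c) ∂μ.prod ν = (∫⁻ P in {P | (P, c) ∈ R}, f P ∂μ.prod ν) * g c := by
    rw [← lintegral_mul_const _ hf]
    exact lintegral_indicator (measurable_prodMk_right hR) _
  simp_rw [hleft, ← hright]
  rw [lintegral_lintegral (f := fun x y ↦ ∫⁻ c, F ((x, y), c) ∂ρ) hF.lintegral_prod_right']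
  exact lintegral_lintegral_swap hF

variable {X : Type*} [PseudoEMetricSpace X] {u : ℝ → X} {p σ δ : ℝ} {I : Set ℝ}

lemma gagliardoEnergy_eq_setLIntegral {J : Set ℝ} (hJ : MeasurableSet J) (hJI : J ⊆ I)
    (hu : ContinuousOn u I) :
    gagliardoEnergy u p σ J =
      ∫⁻ Q in J ×ˢ J, gagliardoKernel u p σ Q.1 Q.2
        ∂(volume.restrict I).prod (volume.restrict I) := by
  rw [gagliardoEnergy, lintegral_lintegral (aemeasurable_gagliardoKernel hJ (hu.mono hJI)),
    ← Measure.prod_restrict, Measure.restrict_restrict_of_subset hJI]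

lemma measurableSet_uIcc_subset_uIcc :
    MeasurableSet {R : (ℝ × ℝ) × (ℝ × ℝ) | uIcc R.2.1 R.2.2 ⊆ uIcc R.1.1 R.1.2} := by
  simp only [uIcc_subset_uIcc_iff_le, ofPred_and]
  exact .inter (measurableSet_le (by fun_prop) (by fun_prop))
    (measurableSet_le (by fun_prop) (by fun_prop))

lemma lintegral_edist_rpow_mul_gagliardoEnergy_uIcc_le (hp : 0 < p) (hδ : 0 < δ)
    (hI : I.OrdConnected) (hu : ContinuousOn u I) :
    ∫⁻ x in I, ∫⁻ y in I, edist x y ^ (-(2 + δ)) * gagliardoEnergy u p σ (uIcc x y) ≤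
      weightConst δ * gagliardoEnergy u p (σ + δ) I := by
  set μ := (volume.restrict I).prod (volume.restrict I) with hμ
  set K : ℝ × ℝ → ℝ≥0∞ := fun Q ↦ gagliardoKernel u p σ Q.1 Q.2
  have hsub (P : ℝ × ℝ) : {Q : ℝ × ℝ | uIcc Q.1 Q.2 ⊆ uIcc P.1 P.2} =
      uIcc P.1 P.2 ×ˢ uIcc P.1 P.2 := by
    ext Q
    exact uIcc_subset_uIcc_iff_mem
  have hweight (Q : ℝ × ℝ) :
      (∫⁻ P in {P : ℝ × ℝ | uIcc Q.1 Q.2 ⊆ uIcc P.1 P.2}, edist P.1 P.2 ^ (-(2 + δ)) ∂μ) * K Q ≤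
        weightConst δ * gagliardoKernel u p (σ + δ) Q.1 Q.2 := by
    rcases eq_or_ne Q.1 Q.2 with hQ | hQ
    · simp [K, hQ, gagliardoKernel_self hp]
    · rw [gagliardoKernel_add hp, ← mul_assoc]
      gcongr
      refine le_trans ?_ (setLIntegral_uIcc_subset_edist_rpow_neg_le hδ hQ)
      gcongr
      rw [hμ, Measure.prod_restrict]
      exact Measure.restrict_le_self
  calc ∫⁻ x in I, ∫⁻ y in I, edist x y ^ (-(2 + δ)) * gagliardoEnergy u p σ (uIcc x y)
    _ = ∫⁻ x in I, ∫⁻ y in I, edist x y ^ (-(2 + δ)) *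
          ∫⁻ Q in {Q : ℝ × ℝ | uIcc Q.1 Q.2 ⊆ uIcc x y}, K Q ∂μ := by
      refine setLIntegral_congr_fun hI.measurableSet fun x hx ↦
        setLIntegral_congr_fun hI.measurableSet fun y hy ↦ ?_
      rw [hsub (x, y), gagliardoEnergy_eq_setLIntegral measurableSet_uIcc
        (hI.uIcc_subset hx hy) hu]
    _ = ∫⁻ Q, (∫⁻ P in {P : ℝ × ℝ | uIcc Q.1 Q.2 ⊆ uIcc P.1 P.2},
          edist P.1 P.2 ^ (-(2 + δ)) ∂μ) * K Q ∂μ :=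
      lintegral_lintegral_mul_setLIntegral_comm measurableSet_uIcc_subset_uIcc
        (f := fun P ↦ edist P.1 P.2 ^ (-(2 + δ))) (by fun_prop)
        (aemeasurable_gagliardoKernel hI.measurableSet hu)
    _ ≤ ∫⁻ Q, weightConst δ * gagliardoKernel u p (σ + δ) Q.1 Q.2 ∂μ := lintegral_mono hweight
    _ = weightConst δ * gagliardoEnergy u p (σ + δ) I := by
      rw [lintegral_const_mul' _ _ (weightConst_ne_top hδ), gagliardoEnergy,
        lintegral_lintegral (aemeasurable_gagliardoKernel hI.measurableSet hu)]

end Fubini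

lemma rpow_oscE_uIcc_div_le {X : Type*} [PseudoEMetricSpace X] {u : ℝ → X} {p τ δ x y : ℝ}
    (hp : 0 < p) (hτ : 1 < τ) (hu : ContinuousOn u (uIcc x y)) :
    oscE u (uIcc x y) ^ p / edist x y ^ (1 + (τ + δ)) ≤
      morreyConst p τ * (edist x y ^ (-(2 + δ)) * gagliardoEnergy u p τ (uIcc x y)) := by
  rcases eq_or_ne x y with rfl | hxy
  · simp [oscE, hp]
  have h0 : edist x y ≠ 0 := (edist_pos.2 hxy).ne'
  calc oscE u (uIcc x y) ^ p / edist x y ^ (1 + (τ + δ))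
    _ ≤ morreyConst p τ * (edist x y ^ (τ - 1) * gagliardoEnergy u p τ (uIcc x y)) *
        edist x y ^ (-(1 + (τ + δ))) := by
      rw [div_eq_mul_inv, ← ENNReal.rpow_neg]
      gcongr
      exact rpow_oscE_uIcc_le hp hτ hu
    _ = morreyConst p τ * (edist x y ^ (-(2 + δ)) * gagliardoEnergy u p τ (uIcc x y)) := by
      rw [show -(2 + δ) = τ - 1 + -(1 + (τ + δ)) by ring,
        ENNReal.rpow_add _ _ h0 (edist_ne_top x y)]
      ring

lemma lintegral_rpow_oscE_le {X : Type*} [PseudoEMetricSpace X] {u : ℝ → X} {p τ δ : ℝ}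
    {I : Set ℝ} (hp : 0 < p) (hτ : 1 < τ) (hδ : 0 < δ) (hI : I.OrdConnected)
    (hu : ContinuousOn u I) :
    ∫⁻ x in I, ∫⁻ y in I, oscE u (uIcc x y ∩ I) ^ p / edist x y ^ (1 + (τ + δ)) ≤
      morreyConst p τ * weightConst δ * gagliardoEnergy u p (τ + δ) I := by
  calc ∫⁻ x in I, ∫⁻ y in I, oscE u (uIcc x y ∩ I) ^ p / edist x y ^ (1 + (τ + δ))
    _ ≤ ∫⁻ x in I, ∫⁻ y in I, morreyConst p τ *
          (edist x y ^ (-(2 + δ)) * gagliardoEnergy u p τ (uIcc x y)) := by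
      refine setLIntegral_mono' hI.measurableSet fun x hx ↦
        setLIntegral_mono' hI.measurableSet fun y hy ↦ ?_
      have hxyI : uIcc x y ⊆ I := hI.uIcc_subset hx hy
      rw [inter_eq_left.2 hxyI]
      exact rpow_oscE_uIcc_div_le hp hτ (hu.mono hxyI)
    _ = morreyConst p τ * ∫⁻ x in I, ∫⁻ y in I,
          edist x y ^ (-(2 + δ)) * gagliardoEnergy u p τ (uIcc x y) := by
      simp_rw [lintegral_const_mul' _ _ (morreyConst_ne_top hp hτ)]
    _ ≤ morreyConst p τ * weightConst δ * gagliardoEnergy u p (τ + δ) I := by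
      rw [mul_assoc]
      gcongr
      exact lintegral_edist_rpow_mul_gagliardoEnergy_uIcc_le hp hδ hI hu

theorem reverse_oscillation_inequality_metric_general {p q : ℝ} (hp : 0 < p) (hq : 1 < q) :
    ∃ C : ℝ, 0 < C ∧ ∀ (X : Type*) [PseudoEMetricSpace X] (I : Set ℝ), I.OrdConnected →
      ∀ u : ℝ → X, ContinuousOn u I →
        (∫⁻ x in I, ∫⁻ y in I, oscE u (uIcc x y ∩ I) ^ p / edist x y ^ (1 + q)) ≤
          ENNReal.ofReal C *
            ∫⁻ x in I, ∫⁻ y in I, edist (u x) (u y) ^ p / edist x y ^ (1 + q) := by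
  obtain ⟨τ, δ, hτ, hδ, rfl⟩ : ∃ τ δ, 1 < τ ∧ 0 < δ ∧ q = τ + δ :=
    ⟨(1 + q) / 2, (q - 1) / 2, by linarith, by linarith, by ring⟩
  set C := morreyConst p τ * weightConst δ
  have hC : C ≠ ∞ := ENNReal.mul_ne_top (morreyConst_ne_top hp hτ) (weightConst_ne_top hδ)
  have hCle : C ≤ ENNReal.ofReal (C.toReal + 1) :=
    ENNReal.le_ofReal_iff_toReal_le hC (by positivity) |>.2 (by linarith)
  refine ⟨C.toReal + 1, by positivity, fun X _ I hI u hu ↦ ?_⟩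
  exact (lintegral_rpow_oscE_le hp hτ hδ hI hu).trans (mul_le_mul_left hCle _)

/-- **Reverse oscillation inequality for metric-space valued maps.** For `0 < s < 1`,
`1 < p` with `sp > 1`, there is a constant `C = C(s,p)` such that for every metric space `X`,
every open interval `I ⊆ ℝ` (an open order-connected set) and every continuous `u : I → X`,
`∫_I ∫_I (osc_{[x,y]} u)^p / |y-x|^{1+sp} ≤ C ∫_I ∫_I d(u(x),u(y))^p / |y-x|^{1+sp}`. -/
theorem reverse_oscillation_inequality_metric (s p : ℝ) (hs0 : 0 < s) (hs1 : s < 1)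
    (hp1 : 1 < p) (hsp : 1 < s * p) :
    ∃ C : ℝ, 0 < C ∧ ∀ (X : Type*) [MetricSpace X] (I : Set ℝ), IsOpen I → I.OrdConnected →
      ∀ u : ℝ → X, ContinuousOn u I →
        (∫⁻ x in I, ∫⁻ y in I,
            oscE u (uIcc x y ∩ I) ^ p / edist x y ^ (1 + s * p)) ≤
          ENNReal.ofReal C *
            ∫⁻ x in I, ∫⁻ y in I,
              edist (u x) (u y) ^ p / edist x y ^ (1 + s * p) := by
  obtain ⟨C, hC, h⟩ :=
    reverse_oscillation_inequality_metric_general (zero_lt_one.trans hp1) hsp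
  exact ⟨C, hC, fun X _ I _ hI u hu ↦ h X I hI u hu⟩
end

section
/- Let (Ñ, d_Ñ) and (N, d_N) be metric spaces and π : Ñ → N be nonexpansive (d_N(π(a),π(b)) ≤ d_Ñ(a,b) for all a,b) and an isometry at scale ρ>0 (d_N(π(a),π(b)) = d_Ñ(a,b) whenever d_Ñ(a,b) ≤ ρ). Assume Ñ has diameter at most D < ∞. Let I ⊆ ℝ be an interval and ũ : I → Ñ be continuous, and set u := π ∘ ũ. Then for all x ≤ y in I, d_Ñ(ũ(x), ũ(y)) ≤ max(1, D/ρ) · osc_{[x,y]} u. -/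
open MeasureTheory Set ENNReal

/-!
Starting from `x`, the distance `d(ũ(x), ũ(t))` runs continuously from `0` to
`d = d(ũ(x), ũ(y))`, hence attains `min ρ d` at some time `t`. At this scale `π` does not
contract, so `u` oscillates by at least `min ρ d`, and `d = max(1, d/ρ) · min ρ d`.
-/

theorem edist_le_oscE {X : Type*} [PseudoEMetricSpace X] (u : ℝ → X) {A : Set ℝ} {a b : ℝ}
    (ha : a ∈ A) (hb : b ∈ A) : edist (u a) (u b) ≤ oscE u A :=
  le_iSup₂_of_le a ha (le_iSup₂_of_le b hb le_rfl)

theorem max_one_div_mul_min {𝕜 : Type*} [Field 𝕜] [LinearOrder 𝕜] [IsStrictOrderedRing 𝕜]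
    {r : 𝕜} (hr : 0 < r) (d : 𝕜) : max 1 (d / r) * min r d = d :=
  calc max 1 (d / r) * min r d = max r d / r * min r d := by
        rw [← max_div_div_right hr.le, div_self hr.ne']
    _ = max r d * min r d / r := div_mul_eq_mul_div _ _ _
    _ = d := by rw [max_mul_min, mul_div_cancel_left₀ _ hr.ne']

section PseudoMetric

variable {M : Type*} [PseudoMetricSpace M] {ρ : ℝ}

theorem exists_dist_eq_min_of_isPreconnected {T : Type*} [TopologicalSpace T] {s : Set T}
    (hs : IsPreconnected s) {f : T → M} (hf : ContinuousOn f s) {x y : T} (hx : x ∈ s)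
    (hy : y ∈ s) (hρ : 0 ≤ ρ) : ∃ t ∈ s, dist (f x) (f t) = min ρ (dist (f x) (f y)) := by
  have hmem : min ρ (dist (f x) (f y)) ∈ Icc (dist (f x) (f x)) (dist (f x) (f y)) := by
    rw [dist_self]
    exact ⟨le_min hρ dist_nonneg, min_le_right _ _⟩
  have hcont : ContinuousOn (fun t => dist (f x) (f t)) s :=
    (continuous_const.dist continuous_id).comp_continuousOn hf
  exact hs.intermediate_value hx hy hcont hmem

variable {N : Type*} [PseudoMetricSpace N] {π : M → N} {f : ℝ → M} {s : Set ℝ} {x y : ℝ}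

theorem ofReal_min_dist_le_oscE_comp (hρ : 0 ≤ ρ)
    (hπ : ∀ a b, dist a b ≤ ρ → dist a b ≤ dist (π a) (π b))
    (hs : s.OrdConnected) (hf : ContinuousOn f s) (hx : x ∈ s) (hy : y ∈ s) :
    ENNReal.ofReal (min ρ (dist (f x) (f y))) ≤ oscE (π ∘ f) s := by
  obtain ⟨t, ht, hdist⟩ :=
    exists_dist_eq_min_of_isPreconnected hs.isPreconnected hf hx hy hρ
  have hscale : dist (f x) (f t) ≤ ρ := hdist.trans_le (min_le_left _ _)
  calc ENNReal.ofReal (min ρ (dist (f x) (f y)))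
      ≤ ENNReal.ofReal (dist (π (f x)) (π (f t))) :=
        ENNReal.ofReal_le_ofReal (hdist.symm.trans_le (hπ _ _ hscale))
    _ = edist (π (f x)) (π (f t)) := (edist_dist _ _).symm
    _ ≤ oscE (π ∘ f) s := edist_le_oscE (π ∘ f) hx ht

theorem lift_dist_le_osc_general {D : ℝ} (hρ : 0 < ρ)
    (hπ : ∀ a b, dist a b ≤ ρ → dist a b ≤ dist (π a) (π b))
    (hs : s.OrdConnected) (hf : ContinuousOn f s) (hx : x ∈ s) (hy : y ∈ s)
    (hD : dist (f x) (f y) ≤ D) :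
    edist (f x) (f y) ≤ ENNReal.ofReal (max 1 (D / ρ)) * oscE (π ∘ f) s := by
  set d := dist (f x) (f y)
  calc edist (f x) (f y) = ENNReal.ofReal (max 1 (d / ρ) * min ρ d) := by
        rw [max_one_div_mul_min hρ, edist_dist]
    _ = ENNReal.ofReal (max 1 (d / ρ)) * ENNReal.ofReal (min ρ d) :=
        ENNReal.ofReal_mul (zero_le_one.trans (le_max_left _ _))
    _ ≤ ENNReal.ofReal (max 1 (D / ρ)) * oscE (π ∘ f) s := by
        gcongr
        exact ofReal_min_dist_le_oscE_comp hρ.le hπ hs hf hx hy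

end PseudoMetric

/-- Let `π : Ñ → N` be nonexpansive and an isometry at scale `ρ > 0`, with `Ñ` of diameter
at most `D`. If `I ⊆ ℝ` is an interval, `ũ : I → Ñ` is continuous and `u = π ∘ ũ`, then for
all `x ≤ y` in `I`, `d_Ñ(ũ(x),ũ(y)) ≤ max(1, D/ρ) · osc_{[x,y]} u`. -/
theorem lift_dist_le_osc {Ntl N : Type*} [MetricSpace Ntl] [MetricSpace N]
    (π : Ntl → N) (ρ D : ℝ) (hρ : 0 < ρ)
    (hnonexp : ∀ a b : Ntl, dist (π a) (π b) ≤ dist a b)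
    (hiso : ∀ a b : Ntl, dist a b ≤ ρ → dist (π a) (π b) = dist a b)
    (hD : ∀ a b : Ntl, dist a b ≤ D)
    (I : Set ℝ) (hI : I.OrdConnected) (ut : ℝ → Ntl) (hut : ContinuousOn ut I) :
    ∀ x ∈ I, ∀ y ∈ I, x ≤ y →
      edist (ut x) (ut y) ≤
        ENNReal.ofReal (max 1 (D / ρ)) * oscE (fun z => π (ut z)) (Icc x y ∩ I) :=
  fun _ hx _ hy hxy =>
    lift_dist_le_osc_general hρ (fun a b hab => (hiso a b hab).ge) (ordConnected_Icc.inter hI)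
      (hut.mono inter_subset_right) ⟨left_mem_Icc.2 hxy, hx⟩ ⟨right_mem_Icc.2 hxy, hy⟩ (hD _ _)
end
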